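/- Let f : ℕ → ℤ be a completely multiplicative function taking values in {-1, 1}, and let σ be a real number with 1/2 < σ ≤ 1. If ∑_{p ≤ x} f(p)/p^σ → -∞ as x → ∞ (the sum over primes p), then the partial sums of μ·f are unbounded: lim sup_{N→∞} |∑_{n=1}^{N} μ(n) f(n)| = ∞, where μ is the Möbius function. -/

import Mathlib

/-!
Suppose `∑_{n ≤ N} μ n * f n = O(N ^ θ)` with `θ < σ`. Partial summation continues the Dirichlet
series of `μ * f` analytically to `θ < s.re`. By the Euler product it equals
`exp (-∑ₚ f p * p ^ (-s))` times a factor that is analytic and nonvanishing on `1 / 2 < s.re`, so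
`s ↦ exp (-∑ₚ f p * p ^ (-s))` continues analytically to a neighbourhood of `[σ, ∞)`. On the real
axis, the squared modulus of this function at `σ + w` is the exponential of a Dirichlet series in
`w` whose coefficients have partial sums tending to `+∞`. Up to a constant it is therefore
`exp (w * ∫ g t * t ^ (-(w + 1)) dt)` with `g ≥ 0`. This is at least `1` as long as the integral
converges, so its logarithm is analytic there too, and Landau's lemma gives convergence for all
`w > 0`. Letting `w → 0` the exponent tends to `+∞`, contradicting continuity at `σ`.
-/

open ArithmeticFunction Asymptotics Filter MeasureTheory ProbabilityTheory Set Topology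

section LaplaceTransform

lemma exists_forall_summable_taylor_of_analyticAt {𝕜 E : Type*} [RCLike 𝕜]
    [NormedAddCommGroup E] [NormedSpace 𝕜 E] [CompleteSpace E] {G : 𝕜 → E} {c : 𝕜}
    (hG : AnalyticAt 𝕜 G c) :
    ∃ ε > 0, ∀ x h : 𝕜, ‖x - c‖ < ε → ‖h‖ < ε →
      Summable fun n : ℕ ↦ (n.factorial : 𝕜)⁻¹ • h ^ n • iteratedDeriv n G x := by
  obtain ⟨p, r, hp⟩ := hG
  obtain ⟨ρ, hρ0, hρ⟩ := ENNReal.lt_iff_exists_nnreal_btwn.1 hp.r_pos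
  refine ⟨ρ / 2, half_pos (mod_cast hρ0), fun x h hx hh ↦ ?_⟩
  have hxh : ‖h‖ₑ + ‖x - c‖ₑ < r := by
    refine lt_of_le_of_lt ?_ hρ
    rw [enorm_eq_nnnorm, enorm_eq_nnnorm, ← ENNReal.coe_add, ENNReal.coe_le_coe,
      ← NNReal.coe_le_coe]
    push_cast
    linarith
  have hpx := hp.changeOrigin (y := x - c) (lt_of_le_of_lt le_add_self hxh)
  rw [add_sub_cancel] at hpx
  have hmem : h ∈ Metric.eball (0 : 𝕜) (r - ‖x - c‖₊) := by
    rwa [Metric.mem_eball, edist_zero_right, lt_tsub_iff_right]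
  refine (hpx.hasSum_iteratedFDeriv hmem).summable.congr fun n ↦ ?_
  rw [iteratedFDeriv_apply_eq_iteratedDeriv_mul_prod, Finset.prod_const, Finset.card_univ,
    Fintype.card_fin]

variable {Ω : Type*} {mΩ : MeasurableSpace Ω} {μ : Measure Ω} {X : Ω → ℝ}

/- For `X ≤ 0` and `0 ≤ h` all terms of `exp (-h X) = ∑ (-h X)^n / n!` are nonnegative, so the
series may be integrated against `exp (t X)` term by term, whether or not the sum is finite. -/
lemma sub_mem_integrableExpSet_of_summable_taylor (hX : ∀ᵐ ω ∂μ, X ω ≤ 0) {t h : ℝ} (hh : 0 ≤ h)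
    (ht : t ∈ interior (integrableExpSet X μ))
    (hsum : Summable fun n : ℕ ↦
      (n.factorial : ℝ)⁻¹ * ((-h) ^ n * iteratedDeriv n (mgf X μ) t)) :
    t - h ∈ integrableExpSet X μ := by
  let F : ℕ → Ω → ℝ := fun n ω ↦ (n.factorial : ℝ)⁻¹ * ((-h) ^ n * (X ω ^ n * Real.exp (t * X ω)))
  have hF_int (n : ℕ) : Integrable (F n) μ :=
    ((integrable_pow_mul_exp_of_mem_interior_integrableExpSet ht n).const_mul _).const_mul _
  have hF_integral (n : ℕ) : ∫ ω, F n ω ∂μ =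
      (n.factorial : ℝ)⁻¹ * ((-h) ^ n * iteratedDeriv n (mgf X μ) t) := by
    rw [iteratedDeriv_mgf ht, integral_const_mul, integral_const_mul]
  have hF_nonneg : ∀ᵐ ω ∂μ, ∀ n, 0 ≤ F n ω := by
    filter_upwards [hX] with ω hω n
    have hhX : 0 ≤ -h * X ω := mul_nonneg_of_nonpos_of_nonpos (neg_nonpos.2 hh) hω
    calc 0 ≤ (n.factorial : ℝ)⁻¹ * ((-h * X ω) ^ n * Real.exp (t * X ω)) := by positivity
      _ = F n ω := by simp only [F, mul_pow, mul_assoc]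
  have hF_hasSum (ω : Ω) : HasSum (F · ω) (Real.exp ((t - h) * X ω)) := by
    have hexp := (NormedSpace.expSeries_div_hasSum_exp (-h * X ω)).mul_right (Real.exp (t * X ω))
    rw [← Real.exp_eq_exp_ℝ, ← Real.exp_add] at hexp
    rw [show (t - h) * X ω = -h * X ω + t * X ω by ring]
    have hF (n : ℕ) : F n ω = (-h * X ω) ^ n / n.factorial * Real.exp (t * X ω) := by
      simp only [F, mul_pow]
      ring
    simpa only [hF] using hexp
  have hF_ofReal : (fun ω ↦ ENNReal.ofReal (Real.exp ((t - h) * X ω))) =ᵐ[μ]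
      fun ω ↦ ∑' n, ENNReal.ofReal (F n ω) := by
    filter_upwards [hF_nonneg] with ω hω
    rw [← ENNReal.ofReal_tsum_of_nonneg hω (hF_hasSum ω).summable, (hF_hasSum ω).tsum_eq]
  have hX_meas : AEMeasurable X μ := aemeasurable_of_mem_interior_integrableExpSet ht
  refine ⟨by fun_prop, ?_⟩
  rw [hasFiniteIntegral_iff_ofReal (ae_of_all _ fun _ ↦ (Real.exp_pos _).le),
    lintegral_congr_ae hF_ofReal,
    lintegral_tsum fun n ↦ (hF_int n).1.aemeasurable.ennreal_ofReal]
  simp_rw [← ofReal_integral_eq_lintegral_ofReal (hF_int _) (ae_all_iff.1 hF_nonneg _),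
    hF_integral]
  rw [← ENNReal.ofReal_tsum_of_nonneg _ hsum]
  · exact ENNReal.ofReal_lt_top
  · exact fun n ↦ hF_integral n ▸ integral_nonneg_of_ae (ae_all_iff.1 hF_nonneg n)

lemma exists_lt_mem_integrableExpSet_of_analyticAt (hX : ∀ᵐ ω ∂μ, X ω ≤ 0) {T : ℝ}
    (hT : Ioi T ⊆ integrableExpSet X μ) {G : ℝ → ℝ} (hG : AnalyticAt ℝ G T)
    (hGmgf : EqOn G (mgf X μ) (Ioi T)) :
    ∃ w < T, w ∈ integrableExpSet X μ := by
  obtain ⟨ε, hε, hsum⟩ := exists_forall_summable_taylor_of_analyticAt hG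
  set t : ℝ := T + ε / 4 with ht
  have hTt : t ∈ Ioi T := by simp [ht, hε]
  have hderiv (n : ℕ) : iteratedDeriv n G t = iteratedDeriv n (mgf X μ) t :=
    (hGmgf.eventuallyEq_of_mem (Ioi_mem_nhds hTt)).iteratedDeriv_eq n
  refine ⟨t - ε / 2, by linarith, sub_mem_integrableExpSet_of_summable_taylor hX (by positivity)
    (interior_maximal hT isOpen_Ioi hTt) ?_⟩
  have htaylor := hsum t (-(ε / 2))
    (by rw [ht, add_sub_cancel_left, Real.norm_of_nonneg] <;> linarith)
    (by rw [norm_neg, Real.norm_of_nonneg] <;> linarith)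
  simpa only [smul_eq_mul, hderiv] using htaylor

lemma Ioi_subset_integrableExpSet_of_forall_analyticAt (hX : ∀ᵐ ω ∂μ, X ω ≤ 0) {a b : ℝ}
    (hb : Ioi b ⊆ integrableExpSet X μ)
    (hext : ∀ T, a < T → Ioi T ⊆ integrableExpSet X μ →
      ∃ G : ℝ → ℝ, AnalyticAt ℝ G T ∧ EqOn G (mgf X μ) (Ioi T)) :
    Ioi a ⊆ integrableExpSet X μ := by
  set Q : Set ℝ := {t | a ≤ t ∧ Ioi t ⊆ integrableExpSet X μ}
  have hQ_bdd : BddBelow Q := ⟨a, fun t ht ↦ ht.1⟩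
  have hQ_ne : Q.Nonempty :=
    ⟨max a b, le_max_left a b, (Ioi_subset_Ioi (le_max_right a b)).trans hb⟩
  set T := sInf Q
  have hT : Ioi T ⊆ integrableExpSet X μ := fun w hw ↦
    let ⟨_, ht, htw⟩ := exists_lt_of_csInf_lt hQ_ne hw
    ht.2 htw
  obtain haT | haT := (le_csInf hQ_ne fun t ht ↦ ht.1).eq_or_lt
  · rwa [haT]
  obtain ⟨G, hG, hGmgf⟩ := hext T haT hT
  obtain ⟨v, hvT, hv⟩ := exists_lt_mem_integrableExpSet_of_analyticAt hX hT hG hGmgf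
  have hv_Ioi : Ioi v ⊆ integrableExpSet X μ := fun w hw ↦
    convex_integrableExpSet.ordConnected.out hv (hT (lt_max_of_lt_left (lt_add_one T)))
      ⟨le_of_lt hw, le_max_right (T + 1) w⟩
  have hvQ : max a v ∈ Q := ⟨le_max_left a v, (Ioi_subset_Ioi (le_max_right a v)).trans hv_Ioi⟩
  exact absurd (csInf_le hQ_bdd hvQ) (not_le.2 (max_lt haT hvT))

lemma eqOn_exp_mul_mgf_of_analyticOnNhd {T b : ℝ} (hT : Ioi T ⊆ integrableExpSet X μ)
    {Φ : ℝ → ℝ} (hΦ : AnalyticOnNhd ℝ Φ (Ioi T))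
    (hΦb : EqOn Φ (fun w ↦ Real.exp (w * mgf X μ w)) (Ioi b)) :
    EqOn Φ (fun w ↦ Real.exp (w * mgf X μ w)) (Ioi T) := by
  have hmgf : AnalyticOnNhd ℝ (fun w ↦ Real.exp (w * mgf X μ w)) (Ioi T) := fun w hw ↦
    (analyticAt_id.mul (analyticAt_mgf (interior_maximal hT isOpen_Ioi hw))).rexp'
  have hz (c : ℝ) (hc : c ≤ max T b) : max T b + 1 ∈ Ioi c := hc.trans_lt (lt_add_one _)
  exact hΦ.eqOn_of_preconnected_of_eventuallyEq hmgf isPreconnected_Ioi (hz T (le_max_left T b))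
    (hΦb.eventuallyEq_of_mem (Ioi_mem_nhds (hz b (le_max_right T b))))

/- `Φ = exp (w * mgf X μ w) ≥ 1` to the right of `T ≥ 0`, hence at `T` by continuity, so that
`log Φ / w` is an analytic extension of the Laplace transform across `T`. -/
lemma Ioi_zero_subset_integrableExpSet_of_eqOn_exp_mul_mgf (hX : ∀ᵐ ω ∂μ, X ω ≤ 0) {b : ℝ}
    (hb : Ioi b ⊆ integrableExpSet X μ) {Φ : ℝ → ℝ} (hΦ : AnalyticOnNhd ℝ Φ (Ioi 0))
    (hΦb : EqOn Φ (fun w ↦ Real.exp (w * mgf X μ w)) (Ioi b)) :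
    Ioi 0 ⊆ integrableExpSet X μ := by
  refine Ioi_subset_integrableExpSet_of_forall_analyticAt hX hb fun T hT0 hT ↦ ?_
  have hΦT := eqOn_exp_mul_mgf_of_analyticOnNhd hT
    (hΦ.mono (Ioi_subset_Ioi (le_of_lt hT0))) hΦb
  have hone_le : 1 ≤ Φ T := by
    refine ge_of_tendsto ((hΦ T hT0).continuousAt.tendsto.mono_left
      (nhdsWithin_le_nhds (s := Ioi T))) ?_
    filter_upwards [self_mem_nhdsWithin] with w hw
    rw [hΦT hw]
    exact Real.one_le_exp (mul_nonneg (hT0.le.trans (le_of_lt hw)) mgf_nonneg)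
  refine ⟨fun w ↦ Real.log (Φ w) / w,
    ((hΦ T hT0).log (zero_lt_one.trans_le hone_le)).div analyticAt_id hT0.ne', fun w hw ↦ ?_⟩
  simp only [hΦT hw, Real.log_exp]
  exact mul_div_cancel_left₀ _ (hT0.trans hw).ne'

end LaplaceTransform

section MellinIntegral

/-- The measure `g t dt / t` on `(1, ∞)`. As `t ^ (-w) = exp (w * (-log t))`, its moment generating
function along `-log` is the Mellin integral `∫ g t * t ^ (-(w + 1)) dt` over `(1, ∞)`. -/
noncomputable def mellinMeasure (g : ℝ → ℝ) : Measure ℝ :=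
  (volume.restrict (Ioi 1)).withDensity fun t ↦ ENNReal.ofReal (g t * t⁻¹)

variable {g : ℝ → ℝ}

lemma ae_mellinMeasure_neg_log_nonpos : ∀ᵐ t ∂mellinMeasure g, -Real.log t ≤ 0 := by
  refine (withDensity_absolutelyContinuous _ _).ae_le ?_
  filter_upwards [ae_restrict_mem measurableSet_Ioi] with t ht
  exact neg_nonpos.2 (Real.log_nonneg (le_of_lt ht))

lemma toReal_ofReal_mul_inv_smul_exp_mul_neg_log (hg : 0 ≤ g) (w : ℝ) {t : ℝ} (ht : 1 < t) :
    (ENNReal.ofReal (g t * t⁻¹)).toReal • Real.exp (w * -Real.log t) = g t * t ^ (-(w + 1)) := by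
  have ht0 : 0 < t := zero_lt_one.trans ht
  rw [ENNReal.toReal_ofReal (mul_nonneg (hg t) (inv_nonneg.2 ht0.le)), smul_eq_mul, mul_assoc,
    mul_neg, ← neg_mul, mul_comm (-w), ← Real.rpow_def_of_pos ht0, ← Real.rpow_neg_one,
    ← Real.rpow_add ht0, neg_add_rev]

lemma mem_integrableExpSet_mellinMeasure_iff (hgm : Measurable g) (hg : 0 ≤ g) {w : ℝ} :
    w ∈ integrableExpSet (fun t ↦ -Real.log t) (mellinMeasure g) ↔
      IntegrableOn (fun t ↦ g t * t ^ (-(w + 1))) (Ioi 1) := by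
  rw [integrableExpSet, mem_ofPred_eq, mellinMeasure,
    integrable_withDensity_iff_integrable_smul' (by fun_prop) (by simp)]
  exact integrableOn_congr_fun
    (fun t ht ↦ toReal_ofReal_mul_inv_smul_exp_mul_neg_log hg w ht) measurableSet_Ioi

lemma mgf_neg_log_mellinMeasure (hgm : Measurable g) (hg : 0 ≤ g) (w : ℝ) :
    mgf (fun t ↦ -Real.log t) (mellinMeasure g) w = ∫ t in Ioi 1, g t * t ^ (-(w + 1)) := by
  rw [mgf, mellinMeasure, integral_withDensity_eq_integral_toReal_smul (by fun_prop) (by simp)]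
  exact setIntegral_congr_fun measurableSet_Ioi
    fun t ht ↦ toReal_ofReal_mul_inv_smul_exp_mul_neg_log hg w ht

lemma rpow_neg_eq_mul_integral_Ioi {U w : ℝ} (hU : 0 < U) (hw : 0 < w) :
    U ^ (-w) = w * ∫ t in Ioi U, t ^ (-(w + 1)) := by
  rw [integral_Ioi_rpow_of_lt (by linarith) hU]
  have hexp : -(w + 1) + 1 = -w := by ring
  rw [hexp, neg_div_neg_eq, mul_div_cancel₀ _ hw.ne']

lemma integrableOn_Ioi_rpow_neg_add_one {U w : ℝ} (hU : 0 < U) (hw : 0 < w) :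
    IntegrableOn (fun t : ℝ ↦ t ^ (-(w + 1))) (Ioi U) :=
  integrableOn_Ioi_rpow_of_lt (by linarith) hU

lemma const_mul_rpow_neg_le_mul_integral (hg : 0 ≤ g) {U M w : ℝ} (hU : 1 ≤ U)
    (hM : ∀ t, U < t → M ≤ g t) (hw : 0 < w)
    (hint : IntegrableOn (fun t ↦ g t * t ^ (-(w + 1))) (Ioi 1)) :
    M * U ^ (-w) ≤ w * ∫ t in Ioi 1, g t * t ^ (-(w + 1)) := by
  have hU0 : 0 < U := zero_lt_one.trans_le hU
  have hpow_nonneg {t : ℝ} (ht : 0 < t) : 0 ≤ t ^ (-(w + 1)) := Real.rpow_nonneg ht.le _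
  calc M * U ^ (-w)
      = w * ∫ t in Ioi U, M * t ^ (-(w + 1)) := by
        rw [rpow_neg_eq_mul_integral_Ioi hU0 hw, integral_const_mul, mul_left_comm]
    _ ≤ w * ∫ t in Ioi U, g t * t ^ (-(w + 1)) := by
        refine mul_le_mul_of_nonneg_left (setIntegral_mono_on
          ((integrableOn_Ioi_rpow_neg_add_one hU0 hw).const_mul M)
          (hint.mono_set (Ioi_subset_Ioi hU)) measurableSet_Ioi fun t ht ↦ ?_) hw.le
        exact mul_le_mul_of_nonneg_right (hM t ht) (hpow_nonneg (hU0.trans ht))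
    _ ≤ w * ∫ t in Ioi 1, g t * t ^ (-(w + 1)) := by
        refine mul_le_mul_of_nonneg_left (setIntegral_mono_set hint ?_
          (Ioi_subset_Ioi hU).eventuallyLE) hw.le
        filter_upwards [ae_restrict_mem measurableSet_Ioi] with t ht
        exact mul_nonneg (hg t) (hpow_nonneg (zero_lt_one.trans ht))

lemma tendsto_mul_integral_mul_rpow_atTop (hg : 0 ≤ g) (hg_top : Tendsto g atTop atTop)
    (hint : ∀ w : ℝ, 0 < w → IntegrableOn (fun t ↦ g t * t ^ (-(w + 1))) (Ioi 1)) :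
    Tendsto (fun w : ℝ ↦ w * ∫ t in Ioi 1, g t * t ^ (-(w + 1))) (𝓝[>] 0) atTop := by
  refine tendsto_atTop.2 fun M ↦ ?_
  obtain ⟨U, hU⟩ := eventually_atTop.1
    ((eventually_ge_atTop 1).and (tendsto_atTop.1 hg_top (M + 1)))
  have hU1 : 1 ≤ U := (hU U le_rfl).1
  have hlim : Tendsto (fun w : ℝ ↦ (M + 1) * U ^ (-w)) (𝓝[>] 0) (𝓝 (M + 1)) := by
    have hcont : ContinuousAt (fun w : ℝ ↦ (M + 1) * U ^ (-w)) 0 := by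
      fun_prop (disch := positivity)
    simpa using hcont.tendsto.mono_left nhdsWithin_le_nhds
  filter_upwards [hlim.eventually_const_le (lt_add_one M), self_mem_nhdsWithin] with w hMw hw
  exact hMw.trans (const_mul_rpow_neg_le_mul_integral hg hU1 (fun t ht ↦ (hU t ht.le).2) hw
    (hint w hw))

/- Landau's lemma pushes the abscissa of convergence of the Mellin integral of `g` down to `0`,
where its divergence contradicts the continuity of `Φ`. -/
lemma not_analyticOnNhd_of_eqOn_exp_mul_integral (hgm : Measurable g) (hg : 0 ≤ g)
    (hg_top : Tendsto g atTop atTop) {b : ℝ}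
    (hint : ∀ w, b < w → IntegrableOn (fun t ↦ g t * t ^ (-(w + 1))) (Ioi 1)) {Φ : ℝ → ℝ}
    (hΦ : EqOn Φ (fun w ↦ Real.exp (w * ∫ t in Ioi 1, g t * t ^ (-(w + 1)))) (Ioi b)) :
    ¬ AnalyticOnNhd ℝ Φ (Ici 0) := by
  intro hΦ_an
  simp_rw [← mgf_neg_log_mellinMeasure hgm hg] at hΦ
  have hΦ_an' := hΦ_an.mono Ioi_subset_Ici_self
  have hsub := Ioi_zero_subset_integrableExpSet_of_eqOn_exp_mul_mgf
    ae_mellinMeasure_neg_log_nonpos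
    (fun w hw ↦ (mem_integrableExpSet_mellinMeasure_iff hgm hg).2 (hint w hw)) hΦ_an' hΦ
  have htop : Tendsto Φ (𝓝[>] 0) atTop := by
    refine (Real.tendsto_exp_atTop.comp (tendsto_mul_integral_mul_rpow_atTop hg hg_top
      fun w hw ↦ (mem_integrableExpSet_mellinMeasure_iff hgm hg).1 (hsub hw))).congr' ?_
    filter_upwards [self_mem_nhdsWithin] with w hw
    simp_rw [Function.comp_apply, ← mgf_neg_log_mellinMeasure hgm hg,
      eqOn_exp_mul_mgf_of_analyticOnNhd hsub hΦ_an' hΦ hw]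
  exact not_tendsto_nhds_of_tendsto_atTop htop _
    ((hΦ_an 0 self_mem_Ici).continuousAt.tendsto.mono_left nhdsWithin_le_nhds)

end MellinIntegral

section Summatory

/-- The summatory function `t ↦ ∑_{1 ≤ n ≤ t} c n` of a sequence `c`. -/
noncomputable def summatory {M : Type*} [AddCommMonoid M] (c : ℕ → M) (t : ℝ) : M :=
  ∑ n ∈ Finset.Icc 1 ⌊t⌋₊, c n

lemma measurable_summatory {M : Type*} [AddCommMonoid M] [MeasurableSpace M] (c : ℕ → M) :
    Measurable (summatory c) :=
  (measurable_from_nat (f := fun N ↦ ∑ n ∈ Finset.Icc 1 N, c n)).comp Nat.measurable_floor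

lemma summatory_of_lt_one {M : Type*} [AddCommMonoid M] (c : ℕ → M) {t : ℝ} (ht : t < 1) :
    summatory c t = 0 := by
  rw [summatory, Nat.floor_eq_zero.2 ht, Finset.Icc_eq_empty_of_lt zero_lt_one, Finset.sum_empty]

lemma locallyIntegrableOn_summatory {𝕜 : Type*} [RCLike 𝕜] (c : ℕ → 𝕜) :
    LocallyIntegrableOn (summatory c) (Ioi 0) := by
  have hone : LocallyIntegrableOn (fun _ : ℝ ↦ (1 : 𝕜)) (Ici 0) :=
    (locallyIntegrable_const 1).locallyIntegrableOn _
  refine LocallyIntegrableOn.mono_set ?_ Ioi_subset_Ici_self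
  simpa only [one_mul] using! locallyIntegrableOn_mul_sum_Icc c (m := 1) le_rfl hone

section Growth

variable {E : Type*} [NormedAddCommGroup E] {c : ℕ → E}

lemma isBigO_summatory_nhdsGT_zero (g : ℝ → ℝ) : summatory c =O[𝓝[>] 0] g := by
  refine (EventuallyEq.isBigO ?_).trans (isBigO_zero g _)
  filter_upwards [nhdsWithin_le_nhds (Iio_mem_nhds one_pos)] with t ht
  exact summatory_of_lt_one c ht

lemma isBigO_summatory_atTop {θ : ℝ}
    (hc : (fun N : ℕ ↦ ∑ n ∈ Finset.Icc 1 N, c n) =O[atTop] fun N ↦ (N : ℝ) ^ θ) :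
    summatory c =O[atTop] fun t : ℝ ↦ t ^ θ := by
  refine (hc.comp_tendsto tendsto_nat_floor_atTop).trans ?_
  exact (isEquivalent_nat_floor.isTheta.rpow (.of_forall fun _ ↦ Nat.cast_nonneg _)
    (eventually_ge_atTop 0)).isBigO

lemma isBigO_sum_Icc_of_norm_le {B : ℝ} (hc : ∀ n, ‖c n‖ ≤ B) :
    (fun N : ℕ ↦ ∑ n ∈ Finset.Icc 1 N, c n) =O[atTop] fun N ↦ (N : ℝ) ^ (1 : ℝ) := by
  refine .of_bound B (.of_forall fun N ↦ ?_)
  rw [Real.rpow_one, Real.norm_natCast, mul_comm]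
  simpa using norm_sum_le_of_le (Finset.Icc 1 N) fun n _ ↦ hc n

end Growth

section Mellin

variable {c : ℕ → ℂ}

lemma differentiableOn_mul_mellin_summatory {θ : ℝ}
    (hc : (fun N : ℕ ↦ ∑ n ∈ Finset.Icc 1 N, c n) =O[atTop] fun N ↦ (N : ℝ) ^ θ) :
    DifferentiableOn ℂ (fun s ↦ s * mellin (summatory c) (-s)) {s | θ < s.re} := by
  intro s hs
  have hmellin : DifferentiableAt ℂ (mellin (summatory c)) (-s) :=
    mellin_differentiableAt_of_isBigO_rpow (locallyIntegrableOn_summatory c)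
      (a := -θ) (by simpa only [neg_neg] using isBigO_summatory_atTop hc)
      (by rw [Complex.neg_re]; exact neg_lt_neg hs) (isBigO_summatory_nhdsGT_zero _) (sub_one_lt _)
  have hcomp : DifferentiableAt ℂ (fun s ↦ mellin (summatory c) (-s)) s :=
    hmellin.comp s differentiableAt_id.neg
  exact (differentiableAt_id.mul hcomp).differentiableWithinAt

lemma mellin_summatory (c : ℕ → ℂ) (s : ℂ) :
    mellin (summatory c) s = ∫ t in Ioi (1 : ℝ), (t : ℂ) ^ (s - 1) • summatory c t := by
  rw [mellin, ← integral_Ici_eq_integral_Ioi (x := (1 : ℝ))]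
  refine setIntegral_eq_of_subset_of_forall_sdiff_eq_zero measurableSet_Ioi
    (Ici_subset_Ioi.2 one_pos) fun t ht ↦ ?_
  rw [summatory_of_lt_one c (not_le.1 ht.2), smul_zero]

lemma LSeries_eq_mul_mellin_summatory {B : ℝ} (hc : ∀ n, ‖c n‖ ≤ B) {s : ℂ}
    (hs : 1 < s.re) : LSeries c s = s * mellin (summatory c) (-s) := by
  rw [LSeries_eq_mul_integral c zero_le_one hs
    (LSeriesSummable_of_bounded_of_one_lt_re (fun n _ ↦ hc n) hs) (isBigO_sum_Icc_of_norm_le hc),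
    mellin_summatory]
  simp_rw [smul_eq_mul, mul_comm (_ ^ _), neg_add']
  rfl

end Mellin

section Real

variable {a : ℕ → ℝ} {B : ℝ}

lemma integrableOn_summatory_mul_rpow (ha : ∀ n, ‖a n‖ ≤ B) {w : ℝ} (hw : 1 < w) :
    IntegrableOn (fun t ↦ summatory a t * t ^ (-(w + 1))) (Ioi 1) := by
  have hconv := mellin_convergent_of_isBigO_scalar (locallyIntegrableOn_summatory a)
    (a := -1) (s := -w)
    (by simpa only [neg_neg] using isBigO_summatory_atTop (isBigO_sum_Icc_of_norm_le ha))
    (neg_lt_neg hw) (isBigO_summatory_nhdsGT_zero _) (sub_one_lt _)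
  simp_rw [neg_add', mul_comm (summatory a _)]
  exact hconv.mono_set (Ioi_subset_Ioi zero_le_one)

lemma tsum_mul_rpow_neg_eq_mul_integral (ha : ∀ n, ‖a n‖ ≤ B) {w : ℝ} (hw : 1 < w) :
    ∑' n, a n * (n : ℝ) ^ (-w) = w * ∫ t in Ioi 1, summatory a t * t ^ (-(w + 1)) := by
  have haC (n : ℕ) : ‖(a n : ℂ)‖ ≤ B := (Complex.norm_real _).trans_le (ha n)
  have hwC : 1 < (w : ℂ).re := hw
  have hL := LSeries_eq_mul_integral (fun n ↦ (a n : ℂ)) zero_le_one hwC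
    (LSeriesSummable_of_bounded_of_one_lt_re (fun n _ ↦ haC n) hwC)
    (isBigO_sum_Icc_of_norm_le haC)
  have hterm (n : ℕ) :
      LSeries.term (fun n ↦ (a n : ℂ)) w n = (a n * (n : ℝ) ^ (-w) : ℝ) := by
    obtain rfl | hn := eq_or_ne n 0
    · simp [Real.zero_rpow (neg_ne_zero.2 (zero_lt_one.trans hw).ne')]
    · rw [LSeries.term_of_ne_zero hn, Real.rpow_neg n.cast_nonneg, ← div_eq_mul_inv]
      push_cast [Complex.ofReal_cpow n.cast_nonneg]
      rfl
  have hint (t : ℝ) (ht : t ∈ Ioi 1) :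
      (∑ k ∈ Finset.Icc 1 ⌊t⌋₊, (a k : ℂ)) * (t : ℂ) ^ (-((w : ℂ) + 1)) =
        (summatory a t * t ^ (-(w + 1)) : ℝ) := by
    push_cast [summatory, Complex.ofReal_cpow (zero_lt_one.trans ht).le]
    rfl
  rw [LSeries, tsum_congr hterm, setIntegral_congr_fun measurableSet_Ioi hint,
    integral_complex_ofReal] at hL
  exact_mod_cast hL

end Real

end Summatory

section DirichletSeries

lemma tendsto_summatory_atTop {a : ℕ → ℝ}
    (ha : Tendsto (fun N ↦ ∑ n ∈ Finset.Icc 1 N, a n) atTop atTop) :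
    Tendsto (summatory a) atTop atTop :=
  ha.comp tendsto_nat_floor_atTop

/- Adding a constant to the summatory function makes it nonnegative, and multiplies `Φ` by a
constant. -/
lemma not_analyticOnNhd_of_eqOn_exp_tsum {a : ℕ → ℝ} {B : ℝ} (haB : ∀ n, ‖a n‖ ≤ B)
    (ha : Tendsto (fun N ↦ ∑ n ∈ Finset.Icc 1 N, a n) atTop atTop) {Φ : ℝ → ℝ}
    (hΦ : EqOn Φ (fun w ↦ Real.exp (∑' n, a n * (n : ℝ) ^ (-w))) (Ioi 1)) :
    ¬ AnalyticOnNhd ℝ Φ (Ici 0) := by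
  intro hΦ_an
  obtain ⟨K, hK⟩ := bddBelow_range_of_tendsto_atTop_atTop ha
  have hg_nonneg : 0 ≤ fun t ↦ summatory a t - K := fun t ↦ sub_nonneg.2 (hK ⟨⌊t⌋₊, rfl⟩)
  have hint (w : ℝ) (hw : 1 < w) := integrableOn_summatory_mul_rpow haB hw
  have hconst (w : ℝ) (hw : 1 < w) : IntegrableOn (fun t : ℝ ↦ K * t ^ (-(w + 1))) (Ioi 1) :=
    (integrableOn_Ioi_rpow_neg_add_one one_pos (zero_lt_one.trans hw)).const_mul K
  refine not_analyticOnNhd_of_eqOn_exp_mul_integral (g := fun t ↦ summatory a t - K) (b := 1)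
    (Φ := fun w ↦ Φ w * Real.exp (-K)) ((measurable_summatory a).sub_const K) hg_nonneg
    (tendsto_atTop_add_const_right atTop (-K) (tendsto_summatory_atTop ha)) (fun w hw ↦ ?_)
    (fun w hw ↦ ?_) (fun w hw ↦ (hΦ_an w hw).mul analyticAt_const)
  · simpa only [sub_mul] using! (hint w hw).sub (hconst w hw)
  · have hK_int : w * ∫ t in Ioi 1, K * t ^ (-(w + 1)) = K := by
      rw [integral_const_mul, mul_left_comm,
        ← rpow_neg_eq_mul_integral_Ioi one_pos (zero_lt_one.trans hw), Real.one_rpow, mul_one]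
    simp_rw [hΦ hw, ← Real.exp_add, sub_mul]
    rw [integral_sub (hint w hw) (hconst w hw), mul_sub, hK_int,
      ← tsum_mul_rpow_neg_eq_mul_integral haB hw, sub_eq_add_neg]

end DirichletSeries

section EulerProduct

lemma norm_log_one_sub_add_self_le {z : ℂ} (hz : ‖z‖ ≤ 3 / 4) :
    ‖Complex.log (1 - z) + z‖ ≤ 2 * ‖z‖ ^ 2 := by
  have hlog := Complex.norm_log_one_add_sub_self_le (z := -z) (by rw [norm_neg]; linarith)
  rw [← sub_eq_add_neg, sub_neg_eq_add, norm_neg] at hlog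
  have hinv : (1 - ‖z‖)⁻¹ ≤ 4 := by
    rw [inv_le_comm₀ (by linarith) (by norm_num)]
    linarith
  calc ‖Complex.log (1 - z) + z‖ ≤ ‖z‖ ^ 2 * (1 - ‖z‖)⁻¹ / 2 := hlog
    _ ≤ ‖z‖ ^ 2 * 4 / 2 := by gcongr
    _ = 2 * ‖z‖ ^ 2 := by ring

lemma rpow_neg_le_three_quarters {a x : ℝ} (ha : 2 ≤ a) (hx : 1 / 2 ≤ x) :
    a ^ (-x) ≤ 3 / 4 := by
  calc a ^ (-x) ≤ 2 ^ (-x) := Real.rpow_le_rpow_of_nonpos two_pos ha (by linarith)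
    _ ≤ 2 ^ (-(1 / 2) : ℝ) := Real.rpow_le_rpow_of_exponent_le one_le_two (by linarith)
    _ = (√2)⁻¹ := by rw [Real.rpow_neg two_pos.le, Real.sqrt_eq_rpow]
    _ ≤ 3 / 4 := by
      rw [inv_le_comm₀ (by positivity) (by norm_num)]
      exact Real.le_sqrt_of_sq_le (by norm_num)

/-- The sum of the terms of order at least two in the expansion of the logarithm of the Euler
product `∏ (1 - f p * p ^ (-s))`. It converges already for `1 / 2 < s.re`. -/
noncomputable def primeLogRemainder (f : ℕ → ℂ) (s : ℂ) : ℂ :=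
  ∑' p : Nat.Primes, (Complex.log (1 - f p * (p : ℂ) ^ (-s)) + f p * (p : ℂ) ^ (-s))

variable {f : ℕ → ℂ}

lemma norm_mul_prime_cpow_neg_le (hf : ∀ p : Nat.Primes, ‖f p‖ ≤ 1) (p : Nat.Primes) {x : ℝ}
    {s : ℂ} (hs : x ≤ s.re) : ‖f p * (p : ℂ) ^ (-s)‖ ≤ (p : ℝ) ^ (-x) := by
  rw [norm_mul, Complex.norm_natCast_cpow_of_pos p.2.pos, Complex.neg_re]
  exact (mul_le_of_le_one_left (by positivity) (hf p)).trans
    (Real.rpow_le_rpow_of_exponent_le (mod_cast p.2.one_le) (neg_le_neg hs))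

lemma norm_mul_prime_cpow_neg_le_three_quarters (hf : ∀ p : Nat.Primes, ‖f p‖ ≤ 1)
    (p : Nat.Primes) {s : ℂ} (hs : 1 / 2 ≤ s.re) : ‖f p * (p : ℂ) ^ (-s)‖ ≤ 3 / 4 :=
  (norm_mul_prime_cpow_neg_le hf p le_rfl).trans
    (rpow_neg_le_three_quarters (mod_cast p.2.two_le) hs)

lemma differentiableOn_primeLogRemainder (hf : ∀ p : Nat.Primes, ‖f p‖ ≤ 1) {x : ℝ}
    (hx : 1 / 2 < x) : DifferentiableOn ℂ (primeLogRemainder f) {s | x < s.re} := by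
  have hle (p : Nat.Primes) (s : ℂ) (hs : x < s.re) : ‖f p * (p : ℂ) ^ (-s)‖ ≤ 3 / 4 :=
    norm_mul_prime_cpow_neg_le_three_quarters hf p (hx.trans hs).le
  have hbound : Summable fun p : Nat.Primes ↦ 2 * (p : ℝ) ^ (-(2 * x)) :=
    (Nat.Primes.summable_rpow.2 (by linarith)).mul_left 2
  refine Complex.differentiableOn_tsum_of_summable_norm hbound (fun p s hs ↦ ?_)
    (isOpen_lt continuous_const Complex.continuous_re) fun p s hs ↦ ?_
  · have hpow : DifferentiableAt ℂ (fun s : ℂ ↦ f p * (p : ℂ) ^ (-s)) s :=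
      (differentiableAt_id.neg.const_cpow (.inl (mod_cast p.2.ne_zero))).const_mul _
    have hslit : 1 - f p * (p : ℂ) ^ (-s) ∈ Complex.slitPlane := by
      rw [sub_eq_add_neg]
      refine Complex.mem_slitPlane_of_norm_lt_one ?_
      rw [norm_neg]
      exact (hle p s hs).trans_lt (by norm_num)
    exact (((differentiableAt_const 1).sub hpow).clog hslit |>.add hpow).differentiableWithinAt
  · calc ‖Complex.log (1 - f p * (p : ℂ) ^ (-s)) + f p * (p : ℂ) ^ (-s)‖
        ≤ 2 * ‖f p * (p : ℂ) ^ (-s)‖ ^ 2 := norm_log_one_sub_add_self_le (hle p s hs)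
      _ ≤ 2 * ((p : ℝ) ^ (-x)) ^ 2 := by
        gcongr
        exact norm_mul_prime_cpow_neg_le hf p (le_of_lt hs)
      _ = 2 * (p : ℝ) ^ (-(2 * x)) := by
        rw [← Real.rpow_natCast, ← Real.rpow_mul p.1.cast_nonneg]
        ring_nf

lemma analyticAt_primeLogRemainder (hf : ∀ p : Nat.Primes, ‖f p‖ ≤ 1) {s : ℂ}
    (hs : 1 / 2 < s.re) : AnalyticAt ℂ (primeLogRemainder f) s := by
  obtain ⟨x, hx, hxs⟩ := exists_between hs
  exact (differentiableOn_primeLogRemainder hf hx).analyticAt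
    ((isOpen_lt continuous_const Complex.continuous_re).mem_nhds hxs)

lemma summable_mul_prime_cpow_neg (hf : ∀ p : Nat.Primes, ‖f p‖ ≤ 1) {s : ℂ} (hs : 1 < s.re) :
    Summable fun p : Nat.Primes ↦ f p * (p : ℂ) ^ (-s) :=
  .of_norm_bounded (Nat.Primes.summable_rpow.2 (neg_lt_neg hs))
    fun p ↦ norm_mul_prime_cpow_neg_le hf p le_rfl

lemma tprod_one_sub_mul_prime_cpow_neg_eq_cexp (hf : ∀ p : Nat.Primes, ‖f p‖ ≤ 1) {s : ℂ}
    (hs : 1 < s.re) : ∏' p : Nat.Primes, (1 - f p * (p : ℂ) ^ (-s)) =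
      Complex.exp (primeLogRemainder f s - ∑' p : Nat.Primes, f p * (p : ℂ) ^ (-s)) := by
  have hsum := summable_mul_prime_cpow_neg hf hs
  have hne (p : Nat.Primes) : 1 - f p * (p : ℂ) ^ (-s) ≠ 0 := by
    intro h
    have hle := norm_mul_prime_cpow_neg_le_three_quarters hf p (s := s) (by linarith)
    rw [← sub_eq_zero.1 h, norm_one] at hle
    norm_num at hle
  rw [← Complex.cexp_tsum_eq_tprod hne hsum.clog_one_sub, primeLogRemainder,
    hsum.clog_one_sub.tsum_add hsum, add_sub_cancel_right]

lemma norm_moebius_mul_le (hf : ∀ n, n ≠ 0 → ‖f n‖ ≤ 1) (n : ℕ) : ‖(moebius n : ℂ) * f n‖ ≤ 1 := by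
  obtain rfl | hn := eq_or_ne n 0
  · simp
  rw [norm_mul, Complex.norm_intCast]
  exact mul_le_one₀ (mod_cast abs_moebius_le_one) (norm_nonneg _) (hf n hn)

lemma LSeries_moebius_mul_eq_tprod (hf1 : f 1 = 1)
    (hfmul : ∀ m n : ℕ, m.Coprime n → f (m * n) = f m * f n) {s : ℂ}
    (hs : LSeriesSummable (fun n ↦ (moebius n : ℂ) * f n) s) :
    LSeries (fun n ↦ (moebius n : ℂ) * f n) s = ∏' p : Nat.Primes, (1 - f p * (p : ℂ) ^ (-s)) := by
  set g : ℕ → ℂ := LSeries.term (fun n ↦ (moebius n : ℂ) * f n) s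
  have hg_apply (n : ℕ) : g n = moebius n * f n * (n : ℂ) ^ (-s) := LSeries.term_def₀ (by simp) s n
  have hg_one : g 1 = 1 := by simp [hg_apply, hf1]
  have hg_mul {m n : ℕ} (hmn : m.Coprime n) : g (m * n) = g m * g n := by
    simp only [hg_apply, isMultiplicative_moebius.map_mul_of_coprime hmn, hfmul m n hmn,
      Nat.cast_mul, Complex.natCast_mul_natCast_cpow, Int.cast_mul]
    ring
  have hlocal (p : Nat.Primes) : ∑' e, g (p ^ e) = 1 - f p * (p : ℂ) ^ (-s) := by
    have hvanish (e : ℕ) (he : e ∉ Finset.range 2) : g (p ^ e) = 0 := by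
      have he2 : 2 ≤ e := by simpa [Nat.succ_le_iff] using he
      rw [hg_apply, moebius_apply_prime_pow p.2 (by omega), if_neg (by omega), Int.cast_zero,
        zero_mul, zero_mul]
    rw [tsum_eq_sum hvanish, Finset.sum_range_succ, Finset.sum_range_one, pow_zero, pow_one,
      hg_one, hg_apply, moebius_apply_prime p.2]
    push_cast
    ring
  rw [LSeries, ← (EulerProduct.eulerProduct_hasProd hg_one hg_mul hs.norm
    (LSeries.term_zero _ _)).tprod_eq]
  exact tprod_congr hlocal

end EulerProduct

section PrimeSums

variable {f : ℕ → ℂ} {σ : ℝ}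

/-- The Dirichlet coefficients, in the variable `w`, of the logarithm of
`|exp (-∑ₚ f p * p ^ (-(σ + w)))| ^ 2` for real `w`. -/
noncomputable def primeLogNormSqCoeff (f : ℕ → ℂ) (σ : ℝ) : ℕ → ℝ :=
  {n | n.Prime}.indicator fun n ↦ -2 * ((f n).re / (n : ℝ) ^ σ)

lemma norm_primeLogNormSqCoeff_le (hf : ∀ p : Nat.Primes, ‖f p‖ ≤ 1) (hσ : 0 ≤ σ) (n : ℕ) :
    ‖primeLogNormSqCoeff f σ n‖ ≤ 2 := by
  rw [primeLogNormSqCoeff, norm_indicator_eq_indicator_norm]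
  refine indicator_le' (fun p hp ↦ ?_) (fun _ _ ↦ zero_le_two) n
  have hp1 : 1 ≤ (p : ℝ) ^ σ := Real.one_le_rpow (mod_cast Nat.Prime.one_le hp) hσ
  have hre : |(f p).re| ≤ 1 := (Complex.abs_re_le_norm _).trans (hf ⟨p, hp⟩)
  rw [norm_mul, norm_div, Real.norm_eq_abs (f p).re, Real.norm_of_nonneg (zero_le_one.trans hp1),
    norm_neg, Real.norm_two]
  linarith [div_le_one_of_le₀ (hre.trans hp1) (zero_le_one.trans hp1)]

lemma sum_Icc_primeLogNormSqCoeff (N : ℕ) : ∑ n ∈ Finset.Icc 1 N, primeLogNormSqCoeff f σ n =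
    -2 * ∑ p ∈ (N + 1).primesBelow, (f p).re / (p : ℝ) ^ σ := by
  have hprimes : (N + 1).primesBelow = {n ∈ Finset.Icc 1 N | n.Prime} := by
    ext p
    simp only [Nat.mem_primesBelow, Finset.mem_filter, Finset.mem_Icc, Nat.lt_succ_iff]
    exact and_congr_left fun hp ↦ (and_iff_right hp.one_le).symm
  rw [hprimes, Finset.mul_sum, Finset.sum_filter]
  simp only [primeLogNormSqCoeff, indicator_apply, mem_ofPred_eq]

lemma tendsto_sum_primeLogNormSqCoeff_atTop
    (hdiv : Tendsto (fun N : ℕ ↦ ∑ p ∈ N.primesBelow, (f p).re / (p : ℝ) ^ σ) atTop atBot) :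
    Tendsto (fun N ↦ ∑ n ∈ Finset.Icc 1 N, primeLogNormSqCoeff f σ n) atTop atTop := by
  simp_rw [sum_Icc_primeLogNormSqCoeff]
  exact ((hdiv.comp (tendsto_add_atTop_nat 1)).const_mul_atBot_of_neg (by norm_num))

lemma normSq_cexp_neg_tsum_prime (hf : ∀ p : Nat.Primes, ‖f p‖ ≤ 1) {w : ℝ} (hw : 1 < σ + w) :
    Complex.normSq (Complex.exp (-∑' p : Nat.Primes, f p * (p : ℂ) ^ (-(σ + w : ℂ)))) =
      Real.exp (∑' n, primeLogNormSqCoeff f σ n * (n : ℝ) ^ (-w)) := by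
  have hsum := summable_mul_prime_cpow_neg hf (s := σ + w) (by simpa using hw)
  have hterm (p : Nat.Primes) : -2 * (f p * (p : ℂ) ^ (-(σ + w : ℂ))).re =
      -2 * ((f p).re / (p : ℝ) ^ σ) * (p : ℝ) ^ (-w) := by
    have hpow : (p : ℂ) ^ (-(σ + w : ℂ)) = ((p : ℝ) ^ (-(σ + w)) : ℝ) := by
      push_cast [Complex.ofReal_cpow p.1.cast_nonneg]
      rfl
    rw [hpow, Complex.re_mul_ofReal, neg_add, Real.rpow_add (mod_cast p.2.pos),
      Real.rpow_neg p.1.cast_nonneg σ]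
    ring
  have htsum : ∑' n, primeLogNormSqCoeff f σ n * (n : ℝ) ^ (-w) =
      ∑' p : Nat.Primes, -2 * ((f p).re / (p : ℝ) ^ σ) * (p : ℝ) ^ (-w) := by
    refine (tsum_congr fun n ↦ ?_).trans (tsum_subtype {n : ℕ | n.Prime}
      fun n ↦ -2 * ((f n).re / (n : ℝ) ^ σ) * (n : ℝ) ^ (-w)).symm
    exact (indicator_mul_left {n : ℕ | n.Prime} (fun n ↦ -2 * ((f n).re / (n : ℝ) ^ σ))
      fun n ↦ (n : ℝ) ^ (-w)).symm
  rw [Complex.normSq_eq_norm_sq, Complex.norm_exp, ← Real.exp_nat_mul, htsum,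
    ← tsum_congr hterm, tsum_mul_left, Complex.neg_re, Complex.re_tsum hsum]
  push_cast
  ring_nf

lemma analyticAt_normSq_comp_ofReal {G : ℂ → ℂ} {x : ℝ} (hG : AnalyticAt ℂ G x) :
    AnalyticAt ℝ (fun t : ℝ ↦ Complex.normSq (G t)) x := by
  simp_rw [Complex.normSq_apply]
  exact (hG.re_ofReal.mul hG.re_ofReal).add (hG.im_ofReal.mul hG.im_ofReal)

theorem not_forall_analyticAt_of_eq_cexp_neg_tsum_prime (hf : ∀ p : Nat.Primes, ‖f p‖ ≤ 1)
    (hσ : 0 ≤ σ)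
    (hdiv : Tendsto (fun N : ℕ ↦ ∑ p ∈ N.primesBelow, (f p).re / (p : ℝ) ^ σ) atTop atBot)
    {G : ℂ → ℂ} (hG : ∀ s : ℂ, 1 < s.re →
      G s = Complex.exp (-∑' p : Nat.Primes, f p * (p : ℂ) ^ (-s))) :
    ¬ ∀ x : ℝ, σ ≤ x → AnalyticAt ℂ G x := by
  intro hG_an
  refine not_analyticOnNhd_of_eqOn_exp_tsum (norm_primeLogNormSqCoeff_le hf hσ)
    (tendsto_sum_primeLogNormSqCoeff_atTop hdiv)
    (Φ := fun w ↦ Complex.normSq (G (σ + w))) (fun w hw ↦ ?_) fun w hw ↦ ?_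
  · have hσw : 1 < σ + w := lt_add_of_nonneg_of_lt hσ hw
    simp only [hG (σ + w) (by simpa using hσw), normSq_cexp_neg_tsum_prime hf hσw]
  · have hGw : AnalyticAt ℂ G ((σ : ℂ) + w) := mod_cast hG_an (σ + w) (le_add_of_nonneg_right hw)
    exact analyticAt_normSq_comp_ofReal (hGw.fun_comp (analyticAt_const.add analyticAt_id))

/- For `1 < s.re` the factor `s * mellin (summatory c) (-s)` of the witness is the Dirichlet series
of `c = μ * f`, by partial summation. -/
lemma exists_analyticAt_eq_cexp_neg_tsum_prime (hf1 : f 1 = 1)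
    (hfmul : ∀ m n : ℕ, m.Coprime n → f (m * n) = f m * f n) (hf : ∀ n, n ≠ 0 → ‖f n‖ ≤ 1)
    {θ : ℝ} (hO : (fun N : ℕ ↦ ∑ n ∈ Finset.Icc 1 N, (moebius n : ℂ) * f n) =O[atTop]
      fun N ↦ (N : ℝ) ^ θ) :
    ∃ G : ℂ → ℂ, (∀ s : ℂ, θ < s.re → 1 / 2 < s.re → AnalyticAt ℂ G s) ∧
      ∀ s : ℂ, 1 < s.re → G s = Complex.exp (-∑' p : Nat.Primes, f p * (p : ℂ) ^ (-s)) := by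
  set c : ℕ → ℂ := fun n ↦ (moebius n : ℂ) * f n
  have hc : ∀ n, ‖c n‖ ≤ 1 := norm_moebius_mul_le hf
  have hfp (p : Nat.Primes) : ‖f p‖ ≤ 1 := hf p p.2.ne_zero
  refine ⟨fun s ↦ s * mellin (summatory c) (-s) * Complex.exp (-primeLogRemainder f s),
    fun s hsθ hs ↦ ?_, fun s hs ↦ ?_⟩
  · have hL := (differentiableOn_mul_mellin_summatory hO).analyticAt
      ((isOpen_lt continuous_const Complex.continuous_re).mem_nhds hsθ)
    exact hL.mul (analyticAt_primeLogRemainder hfp hs).neg.cexp'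
  · simp only
    rw [← LSeries_eq_mul_mellin_summatory hc hs, LSeries_moebius_mul_eq_tprod hf1 hfmul
      (LSeriesSummable_of_bounded_of_one_lt_re (fun n _ ↦ hc n) hs),
      tprod_one_sub_mul_prime_cpow_neg_eq_cexp hfp hs, ← Complex.exp_add]
    ring_nf

end PrimeSums

theorem stmt_18_general {f : ℕ → ℂ} (hf1 : f 1 = 1)
    (hfmul : ∀ m n : ℕ, m.Coprime n → f (m * n) = f m * f n) (hf : ∀ n, n ≠ 0 → ‖f n‖ ≤ 1)
    {σ θ : ℝ} (hσ : 1 / 2 < σ) (hθσ : θ < σ)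
    (hdiv : Tendsto (fun N : ℕ ↦ ∑ p ∈ N.primesBelow, (f p).re / (p : ℝ) ^ σ) atTop atBot) :
    ¬ (fun N : ℕ ↦ ∑ n ∈ Finset.Icc 1 N, (moebius n : ℂ) * f n) =O[atTop]
      fun N ↦ (N : ℝ) ^ θ := by
  intro hO
  obtain ⟨G, hG_an, hG⟩ := exists_analyticAt_eq_cexp_neg_tsum_prime hf1 hfmul hf hO
  exact not_forall_analyticAt_of_eq_cexp_neg_tsum_prime (fun p ↦ hf p p.2.ne_zero)
    (by linarith) hdiv hG fun x hx ↦ hG_an x (hθσ.trans_le hx) (hσ.trans_le hx)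

/-- If `f` is completely multiplicative with values in `{-1, 1}`, `1/2 < σ ≤ 1`, and
`∑_{p ≤ x} f p / p^σ → -∞`, then the partial sums of `μ·f` are unbounded. -/
theorem stmt_18 (f : ℕ → ℤ)
    (hf1 : f 1 = 1)
    (hfmul : ∀ a b : ℕ, f (a * b) = f a * f b)
    (hfpm : ∀ n : ℕ, 1 ≤ n → f n = 1 ∨ f n = -1)
    (σ : ℝ) (hσ : σ ∈ Set.Ioc (1 / 2 : ℝ) 1)
    (hdiv : Filter.Tendsto (fun N : ℕ => ∑ p ∈ N.primesBelow, (f p : ℝ) / (p : ℝ) ^ σ)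
      Filter.atTop Filter.atBot) :
    ∀ C : ℝ, ∃ N : ℕ,
      C < |((∑ n ∈ Finset.Icc 1 N, ArithmeticFunction.moebius n * f n : ℤ) : ℝ)| := by
  intro C
  by_contra! h
  refine stmt_18_general (f := fun n ↦ (f n : ℂ)) (θ := 0) (by simp [hf1])
    (fun m n _ ↦ by simp [hfmul]) (fun n hn ↦ ?_) hσ.1 (one_half_pos.trans hσ.1)
    (by simpa only [Complex.intCast_re] using hdiv) (.of_bound C (.of_forall fun N ↦ ?_))
  · obtain hn1 | hn1 := hfpm n (Nat.one_le_iff_ne_zero.2 hn) <;> simp [hn1]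
  · rw [Real.rpow_zero, norm_one, mul_one]
    exact_mod_cast h N
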